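/- arXiv:2507.12583 — 7 statements merged into one kernel-verified Lean document; each statement's English description precedes it below -/
import Mathlib

section
/- Let x_1, …, x_n ∈ X_m be ranking vectors and for each coordinate j let x̄_j = (1/n) Σ_{i=1}^n x_{ij} be the j-th coordinate mean. If y* ∈ X_m is any ranking vector such that for all coordinates j, j', x̄_j < x̄_{j'} implies y*_j < y*_{j'} (i.e., y* ranks the coordinates in nondecreasing order of the means, with ties among equal means broken arbitrarily), then y* is an optimal centroid: for every ranking vector y ∈ X_m, Σ_{i=1}^n ‖x_i − y*‖² ≤ Σ_{i=1}^n ‖x_i − y‖². -/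
/-- A ranking vector of dimension `m`: its entries are a permutation of `1, 2, …, m`. -/
def IsRankingVector {m : ℕ} (x : Fin m → ℝ) : Prop :=
  ∃ σ : Equiv.Perm (Fin m), ∀ i, x i = ((σ i : ℕ) : ℝ) + 1

/-!
By the parallel axis theorem, applied in each coordinate, the sum of squared distances from the
`x i` to a vector `z` is a constant plus `n` times the squared distance from their mean to `z`.
Any two ranking vectors are rearrangements of one another, so by the rearrangement inequality the
ranking vector nearest to the mean is one ordered like the mean.
-/

open scoped BigOperators

section ParallelAxis

variable {ι κ R : Type*} [CommRing R] [Module ℚ≥0 R]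

theorem sum_sub_sq_eq_sum_sub_expect_sq_add (s : Finset ι) (x : ι → R) (c : R) :
    ∑ i ∈ s, (x i - c) ^ 2 =
      ∑ i ∈ s, (x i - 𝔼 k ∈ s, x k) ^ 2 + s.card * (𝔼 k ∈ s, x k - c) ^ 2 := by
  set μ := 𝔼 k ∈ s, x k with hμ
  have sum_deviation : ∑ i ∈ s, (x i - μ) = 0 := by
    rw [Finset.sum_sub_distrib, Finset.sum_const, hμ, Finset.card_smul_expect, sub_self]
  calc ∑ i ∈ s, (x i - c) ^ 2
      = ∑ i ∈ s, ((x i - μ) ^ 2 + 2 * (μ - c) * (x i - μ) + (μ - c) ^ 2) :=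
        Finset.sum_congr rfl fun i _ => by ring
    _ = ∑ i ∈ s, (x i - μ) ^ 2 + 2 * (μ - c) * ∑ i ∈ s, (x i - μ) + s.card * (μ - c) ^ 2 := by
        rw [Finset.sum_add_distrib, Finset.sum_add_distrib, Finset.mul_sum, Finset.sum_const,
          nsmul_eq_mul]
    _ = ∑ i ∈ s, (x i - μ) ^ 2 + s.card * (μ - c) ^ 2 := by
        rw [sum_deviation, mul_zero, add_zero]

theorem sum_sum_sub_sq_eq_sum_sum_sub_expect_sq_add (s : Finset ι) (t : Finset κ)
    (x : ι → κ → R) (z : κ → R) :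
    ∑ i ∈ s, ∑ j ∈ t, (x i j - z j) ^ 2 =
      ∑ i ∈ s, ∑ j ∈ t, (x i j - 𝔼 k ∈ s, x k j) ^ 2 +
        s.card * ∑ j ∈ t, (𝔼 k ∈ s, x k j - z j) ^ 2 := by
  rw [Finset.sum_comm, Finset.sum_comm (s := s), Finset.mul_sum, ← Finset.sum_add_distrib]
  exact Finset.sum_congr rfl fun j _ => sum_sub_sq_eq_sum_sub_expect_sq_add s (x · j) (z j)

end ParallelAxis

section Rearrangement

variable {ι κ R : Type*} [Fintype κ] [CommRing R] [LinearOrder R] [IsStrictOrderedRing R]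

theorem sum_sub_sq_le_sum_sub_comp_perm_sq_of_monovary {f g : κ → R} (hfg : Monovary f g)
    (σ : Equiv.Perm κ) :
    ∑ j, (g j - f j) ^ 2 ≤ ∑ j, (g j - f (σ j)) ^ 2 := by
  have expand (h : κ → R) :
      ∑ j, (g j - h j) ^ 2 = ∑ j, g j ^ 2 - 2 * ∑ j, h j * g j + ∑ j, h j ^ 2 := by
    rw [Finset.mul_sum, ← Finset.sum_sub_distrib, ← Finset.sum_add_distrib]
    exact Finset.sum_congr rfl fun j _ => by ring
  have sum_sq_comp_perm : ∑ j, f (σ j) ^ 2 = ∑ j, f j ^ 2 := Equiv.sum_comp σ (f · ^ 2)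
  have rearrangement : ∑ j, f (σ j) * g j ≤ ∑ j, f j * g j := hfg.sum_comp_perm_mul_le_sum_mul
  rw [expand f, expand fun j => f (σ j), sum_sq_comp_perm]
  linarith

theorem stmt1_general [Fintype ι] [Module ℚ≥0 R] (x : ι → κ → R) {ystar : κ → R}
    (hrank : Monovary ystar fun j => 𝔼 i, x i j) (σ : Equiv.Perm κ) :
    ∑ i, ∑ j, (x i j - ystar j) ^ 2 ≤ ∑ i, ∑ j, (x i j - ystar (σ j)) ^ 2 := by
  rw [sum_sum_sub_sq_eq_sum_sum_sub_expect_sq_add,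
    sum_sum_sub_sq_eq_sum_sum_sub_expect_sq_add (z := fun j => ystar (σ j))]
  gcongr _ + _ * ?_
  exact sum_sub_sq_le_sum_sub_comp_perm_sq_of_monovary hrank σ

end Rearrangement

theorem IsRankingVector.exists_perm_eq_comp {m : ℕ} {y z : Fin m → ℝ} (hy : IsRankingVector y)
    (hz : IsRankingVector z) : ∃ σ : Equiv.Perm (Fin m), z = y ∘ σ := by
  obtain ⟨σ, hσ⟩ := hy
  obtain ⟨τ, hτ⟩ := hz
  refine ⟨τ.trans σ.symm, funext fun j => ?_⟩
  simp [hσ, hτ]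

/-- If a ranking vector `y*` orders the coordinates in nondecreasing order of the
coordinate means of the observations, then it is an optimal centroid. -/
theorem stmt1 (n m : ℕ) (x : Fin n → Fin m → ℝ) (hx : ∀ i, IsRankingVector (x i))
    (xbar : Fin m → ℝ) (hxbar : ∀ j, xbar j = (∑ i, x i j) / n)
    (ystar : Fin m → ℝ) (hystar : IsRankingVector ystar)
    (hrank : ∀ j j', xbar j < xbar j' → ystar j < ystar j')
    (y : Fin m → ℝ) (hy : IsRankingVector y) :
    ∑ i, ∑ j, (x i j - ystar j) ^ 2 ≤ ∑ i, ∑ j, (x i j - y j) ^ 2 := by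
  obtain ⟨σ, rfl⟩ := hystar.exists_perm_eq_comp hy
  refine stmt1_general x (fun j j' hlt => (hrank j j' ?_).le) σ
  simpa only [hxbar, Fintype.expect_eq_sum_div_card, Fintype.card_fin] using hlt
end

section
/- Let S_1, …, S_k be a partition of a finite family of ranking vectors from X_m into nonempty clusters, let ȳ_ℓ denote the mean of the vectors in cluster S_ℓ, and for each ℓ let the KRC cost of S_ℓ be min_{y ∈ X_m} Σ_{x ∈ S_ℓ} ‖x − y‖². Then the total KRC cost is at most twice the total KMC cost: Σ_{ℓ=1}^k min_{y ∈ X_m} Σ_{x ∈ S_ℓ} ‖x − y‖² ≤ 2 Σ_{ℓ=1}^k Σ_{x ∈ S_ℓ} ‖x − ȳ_ℓ‖². -/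
/-- The KRC cost of a cluster: the minimal sum of squared Euclidean distances to a
ranking-vector centroid. -/
noncomputable def clusterKRC {n m : ℕ} (S : Finset (Fin n)) (p : Fin n → Fin m → ℝ) : ℝ :=
  sInf {v : ℝ | ∃ y : Fin m → ℝ, IsRankingVector y ∧ v = ∑ i ∈ S, ∑ j, (p i j - y j) ^ 2}

/-!
Restrict the centroids to any set that contains the data. Then every member of a cluster is an
admissible centroid, and it suffices to average over the members: for a cluster of size `N`, the
pairwise squared distances sum to `2 N ∑ ‖x i - y‖² - 2 ‖∑ (x i - y)‖²` for every point `y`, so some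
member of the cluster costs at most `2 ∑ ‖x i - y‖²`.
-/

open Finset

section InnerProductSpace

variable {ι κ E : Type*} [SeminormedAddCommGroup E]

/-- The cost of the cluster `s` when its centroid is restricted to `C`: the infimum over `y ∈ C` of
the sums of squared distances from the points of the cluster to `y`. It has the junk value `0` when
`C` is empty. -/
noncomputable def constrainedCost (C : Set E) (s : Finset ι) (x : ι → E) : ℝ :=
  ⨅ y : C, ∑ i ∈ s, ‖x i - y‖ ^ 2

theorem constrainedCost_le {C : Set E} {y : E} (hy : y ∈ C) (s : Finset ι) (x : ι → E) :
    constrainedCost C s x ≤ ∑ i ∈ s, ‖x i - y‖ ^ 2 := by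
  have bounded : BddBelow (Set.range fun y : C => ∑ i ∈ s, ‖x i - y‖ ^ 2) := by
    refine ⟨0, ?_⟩
    rintro _ ⟨z, rfl⟩
    positivity
  exact ciInf_le bounded ⟨y, hy⟩

variable [InnerProductSpace ℝ E]

theorem sum_sum_norm_sub_sq (s : Finset ι) (z : ι → E) :
    ∑ a ∈ s, ∑ i ∈ s, ‖z i - z a‖ ^ 2 =
      #s * (2 * ∑ i ∈ s, ‖z i‖ ^ 2) - 2 * ‖∑ i ∈ s, z i‖ ^ 2 := by
  have sum_inner_eq : ∑ a ∈ s, ∑ i ∈ s, inner ℝ (z i) (z a) = ‖∑ i ∈ s, z i‖ ^ 2 := by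
    simp only [← sum_inner, ← inner_sum, real_inner_self_eq_norm_sq]
  simp only [norm_sub_sq_real, sum_add_distrib, sum_sub_distrib, ← mul_sum, sum_const,
    nsmul_eq_mul, sum_inner_eq]
  ring

theorem sum_sum_norm_sub_sq_le (s : Finset ι) (x : ι → E) (y : E) :
    ∑ a ∈ s, ∑ i ∈ s, ‖x i - x a‖ ^ 2 ≤ #s * (2 * ∑ i ∈ s, ‖x i - y‖ ^ 2) := by
  have translated := sum_sum_norm_sub_sq s fun i => x i - y
  simp only [sub_sub_sub_cancel_right] at translated
  rw [translated]
  exact sub_le_self _ (by positivity)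

theorem exists_mem_sum_norm_sub_sq_le {s : Finset ι} (hs : s.Nonempty) (x : ι → E) (y : E) :
    ∃ a ∈ s, ∑ i ∈ s, ‖x i - x a‖ ^ 2 ≤ 2 * ∑ i ∈ s, ‖x i - y‖ ^ 2 := by
  refine exists_le_of_sum_le hs ?_
  simpa only [sum_const, nsmul_eq_mul] using sum_sum_norm_sub_sq_le s x y

theorem constrainedCost_le_two_mul {C : Set E} {s : Finset ι} (hs : s.Nonempty) {x : ι → E}
    (hx : ∀ i ∈ s, x i ∈ C) (y : E) :
    constrainedCost C s x ≤ 2 * ∑ i ∈ s, ‖x i - y‖ ^ 2 := by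
  obtain ⟨a, ha, cost_le⟩ := exists_mem_sum_norm_sub_sq_le hs x y
  exact (constrainedCost_le (hx a ha) s x).trans cost_le

theorem stmt3_general [Fintype ι] [Fintype κ] [DecidableEq κ] {C : Set E} {x : ι → E}
    (hx : ∀ i, x i ∈ C) {c : ι → κ} (hc : c.Surjective) (y : κ → E) :
    ∑ ℓ, constrainedCost C {i | c i = ℓ} x ≤ 2 * ∑ ℓ, ∑ i with c i = ℓ, ‖x i - y ℓ‖ ^ 2 := by
  rw [mul_sum]
  refine sum_le_sum fun ℓ _ => constrainedCost_le_two_mul ?_ (fun i _ => hx i) (y ℓ)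
  obtain ⟨i, hi⟩ := hc ℓ
  exact ⟨i, by simpa using hi⟩

end InnerProductSpace

theorem clusterKRC_eq_constrainedCost {n m : ℕ} (S : Finset (Fin n)) (p : Fin n → Fin m → ℝ) :
    clusterKRC S p =
      constrainedCost {y : EuclideanSpace ℝ (Fin m) | IsRankingVector y} S
        fun i => WithLp.toLp 2 (p i) := by
  refine congrArg sInf (Set.ext fun v => ⟨?_, ?_⟩)
  · rintro ⟨y, hy, rfl⟩
    exact ⟨⟨WithLp.toLp 2 y, hy⟩, by simp [EuclideanSpace.real_norm_sq_eq]⟩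
  · rintro ⟨⟨y, hy⟩, rfl⟩
    exact ⟨y, hy, by simp [EuclideanSpace.real_norm_sq_eq]⟩

/-- For any partition of ranking vectors into nonempty clusters, the total KRC cost
is at most twice the total KMC cost. -/
theorem stmt3 (n m k : ℕ) (p : Fin n → Fin m → ℝ) (hp : ∀ i, IsRankingVector (p i))
    (c : Fin n → Fin k) (hne : ∀ ℓ, ∃ i, c i = ℓ)
    (ybar : Fin k → Fin m → ℝ)
    (hybar : ∀ ℓ j, ybar ℓ j =
      (∑ i ∈ Finset.univ.filter (fun i => c i = ℓ), p i j) /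
        ((Finset.univ.filter (fun i => c i = ℓ)).card : ℝ)) :
    ∑ ℓ, clusterKRC (Finset.univ.filter (fun i => c i = ℓ)) p ≤
      2 * ∑ ℓ, ∑ i ∈ Finset.univ.filter (fun i => c i = ℓ), ∑ j, (p i j - ybar ℓ j) ^ 2 := by
  simpa only [clusterKRC_eq_constrainedCost, EuclideanSpace.real_norm_sq_eq, WithLp.ofLp_sub,
    Pi.sub_apply] using
    stmt3_general (x := fun i => WithLp.toLp 2 (p i)) hp hne fun ℓ => WithLp.toLp 2 (ybar ℓ)
end

section
/- Let S be a nonempty finite family of ranking vectors from X_m with mean ȳ = (1/|S|) Σ_{x ∈ S} x, and let y* ∈ X_m be a ranking vector maximizing the inner product with the mean, i.e., ⟨ȳ, y*⟩ ≥ ⟨ȳ, c⟩ for every c ∈ X_m. Then |S| · ‖ȳ − y*‖² ≤ Σ_{x ∈ S} ‖x − ȳ‖²; that is, the squared distance from the mean to this optimal ranking-vector centroid, summed over the cluster, is at most the within-cluster sum of squared deviations from the mean. -/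
/-!
All ranking vectors have the same norm, so in `‖y - c‖² = ‖y‖² - 2⟨y, c⟩ + ‖c‖²` only the inner
product depends on the ranking vector `c`: a larger inner product with `y` means a smaller distance
to `y`. Hence `y*` is at least as close to `ȳ` as every single member of the cluster, and the
inequality follows by summing over the members.
-/

theorem sum_sub_sq_le_of_sum_mul_le {ι R : Type*} [CommRing R] [PartialOrder R] [IsOrderedRing R]
    {s : Finset ι} {y a b : ι → R} (hsq : ∑ j ∈ s, a j ^ 2 ≤ ∑ j ∈ s, b j ^ 2)
    (hmul : ∑ j ∈ s, y j * b j ≤ ∑ j ∈ s, y j * a j) :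
    ∑ j ∈ s, (y j - a j) ^ 2 ≤ ∑ j ∈ s, (y j - b j) ^ 2 := by
  have expand (c : ι → R) : ∑ j ∈ s, (y j - c j) ^ 2 =
      ∑ j ∈ s, y j ^ 2 - 2 * ∑ j ∈ s, y j * c j + ∑ j ∈ s, c j ^ 2 := by
    simp only [sub_sq, Finset.sum_add_distrib, Finset.sum_sub_distrib, Finset.mul_sum, mul_assoc]
  rw [expand a, expand b]
  gcongr
  exact zero_le_two

theorem IsRankingVector.sum_comp_eq_sum_comp {M : Type*} [AddCommMonoid M] {m : ℕ}
    {x y : Fin m → ℝ} (hx : IsRankingVector x) (hy : IsRankingVector y) (f : ℝ → M) :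
    ∑ j, f (x j) = ∑ j, f (y j) := by
  obtain ⟨σ, hσ⟩ := hx
  obtain ⟨τ, hτ⟩ := hy
  calc ∑ j, f (x j) = ∑ j, f ((σ j : ℕ) + 1) := by simp only [hσ]
    _ = ∑ j : Fin m, f ((j : ℕ) + 1) := Equiv.sum_comp σ fun j ↦ f ((j : ℕ) + 1)
    _ = ∑ j, f ((τ j : ℕ) + 1) := (Equiv.sum_comp τ fun j ↦ f ((j : ℕ) + 1)).symm
    _ = ∑ j, f (y j) := by simp only [hτ]

theorem IsRankingVector.sum_sub_sq_le {m : ℕ} {x c y : Fin m → ℝ}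
    (hx : IsRankingVector x) (hc : IsRankingVector c)
    (hmul : ∑ j, y j * x j ≤ ∑ j, y j * c j) :
    ∑ j, (y j - c j) ^ 2 ≤ ∑ j, (y j - x j) ^ 2 :=
  sum_sub_sq_le_of_sum_mul_le (hc.sum_comp_eq_sum_comp hx (· ^ 2)).le hmul

theorem stmt4_general {ι : Type*} [Fintype ι] {m : ℕ} {p : ι → Fin m → ℝ}
    (hp : ∀ i, IsRankingVector (p i)) {y ystar : Fin m → ℝ} (hstar : IsRankingVector ystar)
    (hmax : ∀ i, ∑ j, y j * p i j ≤ ∑ j, y j * ystar j) :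
    (Fintype.card ι : ℝ) * ∑ j, (y j - ystar j) ^ 2 ≤ ∑ i, ∑ j, (p i j - y j) ^ 2 := by
  simp only [sub_sq_comm (p _ _), ← nsmul_eq_mul]
  exact Finset.card_nsmul_le_sum _ _ _ fun i _ ↦ (hp i).sum_sub_sq_le hstar (hmax i)

/-- If `y*` is a ranking vector maximizing the inner product with the cluster mean `ȳ`,
then `|S| ⬝ ‖ȳ − y*‖²` is at most the within-cluster sum of squared deviations. -/
theorem stmt4 (n m : ℕ) (hn : 0 < n)
    (p : Fin n → Fin m → ℝ) (hp : ∀ i, IsRankingVector (p i))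
    (ybar : Fin m → ℝ) (hybar : ∀ j, ybar j = (∑ i, p i j) / n)
    (ystar : Fin m → ℝ) (hstar : IsRankingVector ystar)
    (hmax : ∀ c : Fin m → ℝ, IsRankingVector c →
      ∑ j, ybar j * c j ≤ ∑ j, ybar j * ystar j) :
    (n : ℝ) * ∑ j, (ybar j - ystar j) ^ 2 ≤ ∑ i, ∑ j, (p i j - ybar j) ^ 2 := by
  simpa only [Fintype.card_fin] using stmt4_general hp hstar fun i ↦ hmax (p i) (hp i)
end

section
/- Let S = {x_1, …, x_n} be a finite family of ranking vectors from X_m and let k ≥ 1. Let v_KMC* be the minimum of v_KMC(S_1, …, S_k) over all partitions of S into at most k nonempty clusters, and let v_KRC* be the minimum of v_KRC(S_1, …, S_k) over the same partitions. Then v_KMC* ≤ v_KRC* ≤ 2 v_KMC*. -/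
/-- The KMC objective of a partition (given by the assignment `c`), with optimally
chosen (mean) centroids. -/
noncomputable def vKMC {n m k : ℕ} (p : Fin n → Fin m → ℝ) (c : Fin n → Fin k) : ℝ :=
  ∑ ℓ, ∑ i ∈ Finset.univ.filter (fun i => c i = ℓ), ∑ j,
    (p i j - (∑ i' ∈ Finset.univ.filter (fun i' => c i' = ℓ), p i' j) /
      ((Finset.univ.filter (fun i' => c i' = ℓ)).card : ℝ)) ^ 2

/-- The KRC objective of a partition (given by the assignment `c`), with optimally
chosen ranking-vector centroids. -/
noncomputable def vKRC {n m k : ℕ} (p : Fin n → Fin m → ℝ) (c : Fin n → Fin k) : ℝ :=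
  ∑ ℓ, sInf {v : ℝ | ∃ y : Fin m → ℝ, IsRankingVector y ∧
    v = ∑ i ∈ Finset.univ.filter (fun i => c i = ℓ), ∑ j, (p i j - y j) ^ 2}

/-! For a cluster `s` with mean `μ` and any `y`, the parallel axis identity
`∑ i ∈ s, ‖x i - y‖ ^ 2 = ∑ i ∈ s, ‖x i - μ‖ ^ 2 + #s * ‖y - μ‖ ^ 2` shows that no centroid beats
the mean. Taking for `y` the point of the cluster nearest to `μ`, the last term is at most the sum
before it, so that this admissible centroid costs at most twice as much as the mean. -/

open Finset

section Cluster

variable {ι E : Type*} [NormedAddCommGroup E] [InnerProductSpace ℝ E]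

/-- The mean of the points `x i`, `i ∈ s`; it is `0` for empty `s`. -/
noncomputable def clusterMean (s : Finset ι) (x : ι → E) : E :=
  (#s : ℝ)⁻¹ • ∑ i ∈ s, x i

/-- The sum of squared distances from the points of the cluster `s` to their mean, the contribution
of `s` to the `k`-means objective. -/
noncomputable def meanCost (s : Finset ι) (x : ι → E) : ℝ :=
  ∑ i ∈ s, ‖x i - clusterMean s x‖ ^ 2

/-- The least sum of squared distances from the points of the cluster `s` to a centroid which has to
lie in `Y`; it is an infimum in `ℝ`, hence `0` for empty `Y`. -/
noncomputable def restrictedCost (Y : Set E) (s : Finset ι) (x : ι → E) : ℝ :=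
  sInf ((fun y => ∑ i ∈ s, ‖x i - y‖ ^ 2) '' Y)

theorem card_smul_clusterMean (s : Finset ι) (x : ι → E) :
    (#s : ℝ) • clusterMean s x = ∑ i ∈ s, x i := by
  rcases s.eq_empty_or_nonempty with rfl | hs
  · simp
  · exact smul_inv_smul₀ (Nat.cast_ne_zero.2 hs.card_ne_zero) _

theorem sum_sub_clusterMean (s : Finset ι) (x : ι → E) :
    ∑ i ∈ s, (x i - clusterMean s x) = 0 := by
  rw [sum_sub_distrib, sum_const, ← Nat.cast_smul_eq_nsmul ℝ, card_smul_clusterMean, sub_self]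

theorem sum_norm_sub_sq_eq_meanCost_add (s : Finset ι) (x : ι → E) (y : E) :
    ∑ i ∈ s, ‖x i - y‖ ^ 2 = meanCost s x + #s * ‖y - clusterMean s x‖ ^ 2 := by
  set μ := clusterMean s x with hμ
  have expand (i : ι) :
      ‖x i - y‖ ^ 2 = ‖x i - μ‖ ^ 2 - 2 * inner ℝ (x i - μ) (y - μ) + ‖y - μ‖ ^ 2 := by
    rw [← norm_sub_sq_real, sub_sub_sub_cancel_right]
  have cross_terms : ∑ i ∈ s, inner ℝ (x i - μ) (y - μ) = 0 := by
    rw [← sum_inner, sum_sub_clusterMean, inner_zero_left]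
  simp only [expand, sum_add_distrib, sum_sub_distrib, ← mul_sum, cross_terms, sum_const,
    nsmul_eq_mul, meanCost, ← hμ, mul_zero, sub_zero]

theorem meanCost_le_sum_norm_sub_sq (s : Finset ι) (x : ι → E) (y : E) :
    meanCost s x ≤ ∑ i ∈ s, ‖x i - y‖ ^ 2 := by
  rw [sum_norm_sub_sq_eq_meanCost_add]
  exact le_add_of_nonneg_right (by positivity)

theorem exists_mem_card_mul_norm_sub_clusterMean_sq_le {s : Finset ι} (hs : s.Nonempty)
    (x : ι → E) : ∃ i ∈ s, #s * ‖x i - clusterMean s x‖ ^ 2 ≤ meanCost s x := by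
  obtain ⟨i, hi, nearest⟩ := s.exists_min_image (fun i => ‖x i - clusterMean s x‖ ^ 2) hs
  refine ⟨i, hi, ?_⟩
  rw [← nsmul_eq_mul]
  exact card_nsmul_le_sum s _ _ nearest

theorem meanCost_le_restrictedCost {Y : Set E} (hY : Y.Nonempty) (s : Finset ι) (x : ι → E) :
    meanCost s x ≤ restrictedCost Y s x :=
  le_csInf (hY.image _) (Set.forall_mem_image.2 fun y _ => meanCost_le_sum_norm_sub_sq s x y)

theorem restrictedCost_le_sum_norm_sub_sq {Y : Set E} {y : E} (hy : y ∈ Y) (s : Finset ι)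
    (x : ι → E) : restrictedCost Y s x ≤ ∑ i ∈ s, ‖x i - y‖ ^ 2 :=
  csInf_le ⟨meanCost s x, Set.forall_mem_image.2 fun y _ => meanCost_le_sum_norm_sub_sq s x y⟩
    (Set.mem_image_of_mem _ hy)

theorem restrictedCost_le_two_mul_meanCost {Y : Set E} (hY : Y.Nonempty) {s : Finset ι}
    {x : ι → E} (hx : ∀ i ∈ s, x i ∈ Y) : restrictedCost Y s x ≤ 2 * meanCost s x := by
  rcases s.eq_empty_or_nonempty with rfl | hs
  · obtain ⟨y, hy⟩ := hY
    simpa [meanCost] using restrictedCost_le_sum_norm_sub_sq hy ∅ x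
  · obtain ⟨i, hi, near⟩ := exists_mem_card_mul_norm_sub_clusterMean_sq_le hs x
    calc restrictedCost Y s x ≤ ∑ i' ∈ s, ‖x i' - x i‖ ^ 2 :=
          restrictedCost_le_sum_norm_sub_sq (hx i hi) s x
      _ = meanCost s x + #s * ‖x i - clusterMean s x‖ ^ 2 :=
          sum_norm_sub_sq_eq_meanCost_add s x (x i)
      _ ≤ 2 * meanCost s x := by linarith

end Cluster

section Clustering

variable {ι κ E : Type*} [Fintype ι] [Fintype κ] [DecidableEq κ]
  [NormedAddCommGroup E] [InnerProductSpace ℝ E]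

/-- The `k`-means objective of the clustering of the points `x i` whose clusters are the fibres of
`c`; empty fibres contribute `0`, so that at most `#κ` nonempty clusters are allowed. -/
noncomputable def kMeansCost (x : ι → E) (c : ι → κ) : ℝ :=
  ∑ ℓ, meanCost {i | c i = ℓ} x

/-- The variant of `kMeansCost` in which all centroids have to lie in `Y`. -/
noncomputable def restrictedKMeansCost (Y : Set E) (x : ι → E) (c : ι → κ) : ℝ :=
  ∑ ℓ, restrictedCost Y {i | c i = ℓ} x

theorem kMeansCost_le_restrictedKMeansCost {Y : Set E} (hY : Y.Nonempty) (x : ι → E)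
    (c : ι → κ) : kMeansCost x c ≤ restrictedKMeansCost Y x c :=
  sum_le_sum fun _ _ => meanCost_le_restrictedCost hY _ x

theorem restrictedKMeansCost_le_two_mul_kMeansCost {Y : Set E} (hY : Y.Nonempty) {x : ι → E}
    (hx : ∀ i, x i ∈ Y) (c : ι → κ) : restrictedKMeansCost Y x c ≤ 2 * kMeansCost x c := by
  rw [kMeansCost, mul_sum]
  exact sum_le_sum fun _ _ => restrictedCost_le_two_mul_meanCost hY fun i _ => hx i

theorem stmt5_general [Nonempty κ] {Y : Set E} (hY : Y.Nonempty) {x : ι → E}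
    (hx : ∀ i, x i ∈ Y) :
    (⨅ c : ι → κ, kMeansCost x c) ≤ (⨅ c : ι → κ, restrictedKMeansCost Y x c) ∧
      (⨅ c : ι → κ, restrictedKMeansCost Y x c) ≤ 2 * ⨅ c : ι → κ, kMeansCost x c := by
  constructor
  · exact le_ciInf fun c => (ciInf_le (Set.finite_range _).bddBelow c).trans
      (kMeansCost_le_restrictedKMeansCost hY x c)
  · obtain ⟨c, hc⟩ := exists_eq_ciInf_of_finite (f := fun c : ι → κ => kMeansCost x c)
    rw [← hc]
    exact (ciInf_le (Set.finite_range _).bddBelow c).trans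
      (restrictedKMeansCost_le_two_mul_kMeansCost hY hx c)

end Clustering

section Ranking

variable {n m k : ℕ}

/-- The set `X_m` of ranking vectors, in `EuclideanSpace` because `Fin m → ℝ` carries the supremum
norm. -/
def rankingVectors (m : ℕ) : Set (EuclideanSpace ℝ (Fin m)) :=
  {y | IsRankingVector y.ofLp}

theorem rankingVectors_nonempty (m : ℕ) : (rankingVectors m).Nonempty :=
  ⟨WithLp.toLp 2 fun i => (i : ℝ) + 1, Equiv.refl _, fun _ => rfl⟩

theorem vKMC_eq_kMeansCost (p : Fin n → Fin m → ℝ) (c : Fin n → Fin k) :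
    vKMC p c = kMeansCost (fun i => WithLp.toLp 2 (p i)) c := by
  simp [vKMC, kMeansCost, meanCost, clusterMean, EuclideanSpace.real_norm_sq_eq, div_eq_inv_mul]

theorem vKRC_eq_restrictedKMeansCost (p : Fin n → Fin m → ℝ) (c : Fin n → Fin k) :
    vKRC p c = restrictedKMeansCost (rankingVectors m) (fun i => WithLp.toLp 2 (p i)) c := by
  refine sum_congr rfl fun ℓ _ => congrArg sInf (Set.ext fun v => ?_)
  simp only [Set.mem_ofPred_eq, Set.mem_image, rankingVectors, EuclideanSpace.real_norm_sq_eq,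
    PiLp.sub_apply, eq_comm (a := v)]
  exact (WithLp.equiv 2 (Fin m → ℝ)).symm.exists_congr_left

end Ranking

/-- `v_KMC* ≤ v_KRC* ≤ 2 v_KMC*`, where the stars denote minima over all partitions
of the ranking vectors into at most `k` nonempty clusters. -/
theorem stmt5 (n m k : ℕ) (hk : 1 ≤ k)
    (p : Fin n → Fin m → ℝ) (hp : ∀ i, IsRankingVector (p i)) :
    sInf (Set.range fun c : Fin n → Fin k => vKMC p c) ≤
        sInf (Set.range fun c : Fin n → Fin k => vKRC p c) ∧
      sInf (Set.range fun c : Fin n → Fin k => vKRC p c) ≤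
        2 * sInf (Set.range fun c : Fin n → Fin k => vKMC p c) := by
  have : Nonempty (Fin k) := ⟨⟨0, hk⟩⟩
  simp only [vKMC_eq_kMeansCost, vKRC_eq_restrictedKMeansCost]
  exact stmt5_general (rankingVectors_nonempty m) hp
end

section
/- Let z, w ∈ {0,1}^η be binary vectors and let x, y ∈ ℝ^{2η} be their respective alternating pair transformations. Then the Hamming distance between z and w equals half the squared Euclidean distance between x and y: Σ_{j=1}^η |z_j − w_j| = (1/2) ‖x − y‖². -/
/-- The alternating pair transformation of a binary vector `z ∈ {0,1}^η`:
(in 1-indexed terms) `x_{2j-1} = (2j-1) + z_j` and `x_{2j} = 2j - z_j`. -/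
def altPair {η : ℕ} (z : Fin η → ℝ) : Fin (2 * η) → ℝ := fun i =>
  if i.val % 2 = 0 then ((i.val : ℝ) + 1) + z ⟨i.val / 2, by have := i.isLt; omega⟩
  else ((i.val : ℝ) + 1) - z ⟨i.val / 2, by have := i.isLt; omega⟩

theorem sum_fin_two_mul {M : Type*} [AddCommMonoid M] {n : ℕ} (f : Fin (2 * n) → M) :
    ∑ i, f i = ∑ j : Fin n, (f ⟨2 * j, by omega⟩ + f ⟨2 * j + 1, by omega⟩) := by
  rw [← (finProdFinEquiv.trans (finCongr (mul_comm n 2))).sum_comp, Fintype.sum_prod_type]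
  refine Fintype.sum_congr _ _ fun j => ?_
  rw [Fin.sum_univ_two]
  congr 2 <;> ext <;> simp [add_comm]

section altPair

variable {η : ℕ} (z w : Fin η → ℝ) (j : Fin η)

theorem altPair_two_mul : altPair z ⟨2 * j, by omega⟩ = 2 * j + 1 + z j := by
  simp [altPair]

theorem altPair_two_mul_add_one : altPair z ⟨2 * j + 1, by omega⟩ = 2 * j + 2 - z j := by
  have half : (2 * (j : ℕ) + 1) / 2 = j := by omega
  simp only [altPair, half]
  norm_num [add_assoc]

theorem sum_altPair_sub_sq :
    ∑ i, (altPair z i - altPair w i) ^ 2 = 2 * ∑ j, (z j - w j) ^ 2 := by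
  rw [sum_fin_two_mul, Finset.mul_sum]
  refine Fintype.sum_congr _ _ fun j => ?_
  rw [altPair_two_mul, altPair_two_mul, altPair_two_mul_add_one, altPair_two_mul_add_one]
  ring

end altPair

theorem abs_sub_eq_sq_of_eq_zero_or_one {R : Type*} [Ring R] [LinearOrder R]
    [IsOrderedRing R] {a b : R} (ha : a = 0 ∨ a = 1) (hb : b = 0 ∨ b = 1) :
    |a - b| = (a - b) ^ 2 := by
  rcases ha with rfl | rfl <;> rcases hb with rfl | rfl <;> simp

/-- The Hamming distance between two binary vectors equals half the squared Euclidean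
distance between their alternating pair transformations. -/
theorem stmt10 (η : ℕ) (z w : Fin η → ℝ)
    (hz : ∀ j, z j = 0 ∨ z j = 1) (hw : ∀ j, w j = 0 ∨ w j = 1) :
    ∑ j, |z j - w j| = (1 / 2) * ∑ i, (altPair z i - altPair w i) ^ 2 := by
  calc ∑ j, |z j - w j| = ∑ j, (z j - w j) ^ 2 :=
        Fintype.sum_congr _ _ fun j => abs_sub_eq_sq_of_eq_zero_or_one (hz j) (hw j)
    _ = (1 / 2) * ∑ i, (altPair z i - altPair w i) ^ 2 := by
        rw [sum_altPair_sub_sq]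
        ring
end

section
/- Let x_1, …, x_{2k} ∈ X_m be pairwise distinct ranking vectors partitioned into k clusters S_1, …, S_k, and let y_1, …, y_k ∈ X_m be arbitrary ranking-vector centroids for these clusters. Then the clustering objective is at least 2k: Σ_{ℓ=1}^k Σ_{x ∈ S_ℓ} ‖x − y_ℓ‖² ≥ 2k. -/
/-!
Two distinct permutations disagree in at least two places, and at each such place the corresponding
ranking vectors differ by a nonzero integer, so distinct ranking vectors are at squared distance at
least `2`. Each centroid equals at most one vector of its cluster, so all but at most one vector
per cluster contribute at least `2`: clustering `n` vectors into `k` clusters costs at least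
`2 * (n - k)`.
-/

theorem hammingDist_le_sum_sq_sub {ι : Type*} [Fintype ι] (a b : ι → ℤ) :
    (hammingDist a b : ℤ) ≤ ∑ j, (a j - b j) ^ 2 := by
  rw [hammingDist, Finset.natCast_card_filter]
  refine Finset.sum_le_sum fun j _ => ?_
  split_ifs with hne
  · exact Int.add_one_le_iff.mpr (sq_pos_of_ne_zero (sub_ne_zero.mpr hne))
  · exact sq_nonneg _

theorem two_le_hammingDist_perm {α : Type*} [Fintype α] [DecidableEq α] {σ τ : Equiv.Perm α}
    (hne : σ ≠ τ) : 2 ≤ hammingDist σ τ := by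
  have hsupport : (τ⁻¹ * σ).support = ({j | σ j ≠ τ j} : Finset α) := by
    ext j
    simp [Equiv.symm_apply_eq]
  rw [hammingDist, ← hsupport]
  exact Equiv.Perm.two_le_card_support_of_ne_one fun h => hne (inv_mul_eq_one.mp h).symm

theorem IsRankingVector.two_le_sum_sq_sub {m : ℕ} {x y : Fin m → ℝ} (hx : IsRankingVector x)
    (hy : IsRankingVector y) (hne : x ≠ y) : 2 ≤ ∑ j, (x j - y j) ^ 2 := by
  obtain ⟨σ, hσ⟩ := hx
  obtain ⟨τ, hτ⟩ := hy
  have hperm : σ ≠ τ := by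
    rintro rfl
    exact hne (funext fun j => (hσ j).trans (hτ j).symm)
  have hcast : Function.Injective fun r : Fin m => ((r : ℕ) : ℤ) :=
    Nat.cast_injective.comp Fin.val_injective
  have hint : (2 : ℤ) ≤ ∑ j, (((σ j : ℕ) : ℤ) - ((τ j : ℕ) : ℤ)) ^ 2 :=
    calc (2 : ℤ) ≤ hammingDist σ τ := mod_cast two_le_hammingDist_perm hperm
      _ = hammingDist (fun j => ((σ j : ℕ) : ℤ)) (fun j => ((τ j : ℕ) : ℤ)) := by
        rw [hammingDist_comp (fun _ (r : Fin m) => ((r : ℕ) : ℤ)) fun _ => hcast]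
      _ ≤ _ := hammingDist_le_sum_sq_sub _ _
  simp only [hσ, hτ, add_sub_add_right_eq_sub]
  exact_mod_cast hint

theorem card_le_card_filter_ne_add_one {α β : Type*} [DecidableEq β] {s : Finset α} {f : α → β}
    (hf : Set.InjOn f s) (b : β) : s.card ≤ (s.filter fun a => f a ≠ b).card + 1 := by
  have hfiber : (s.filter fun a => f a = b).card ≤ 1 := by
    refine Finset.card_le_one.mpr fun a ha a' ha' => ?_
    rw [Finset.mem_filter] at ha ha'
    exact hf ha.1 ha'.1 (ha.2.trans ha'.2.symm)
  have hsplit := s.card_filter_add_card_filter_not fun a => f a = b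
  lia

theorem two_mul_card_sub_one_le_sum_sq_sub {ι : Type*} {m : ℕ} {s : Finset ι}
    {x : ι → Fin m → ℝ} (hx : ∀ i ∈ s, IsRankingVector (x i)) (hinj : Set.InjOn x s)
    {y : Fin m → ℝ} (hy : IsRankingVector y) :
    2 * ((s.card : ℝ) - 1) ≤ ∑ i ∈ s, ∑ j, (x i j - y j) ^ 2 := by
  classical
  have hcard : (s.card : ℝ) ≤ (s.filter fun i => x i ≠ y).card + 1 :=
    mod_cast card_le_card_filter_ne_add_one hinj y
  calc 2 * ((s.card : ℝ) - 1) ≤ (s.filter fun i => x i ≠ y).card • (2 : ℝ) := by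
        rw [nsmul_eq_mul]
        linarith
    _ ≤ ∑ i ∈ s.filter (fun i => x i ≠ y), ∑ j, (x i j - y j) ^ 2 := by
        refine Finset.card_nsmul_le_sum _ _ _ fun i hi => ?_
        rw [Finset.mem_filter] at hi
        exact (hx i hi.1).two_le_sum_sq_sub hy hi.2
    _ ≤ ∑ i ∈ s, ∑ j, (x i j - y j) ^ 2 :=
        Finset.sum_le_sum_of_subset_of_nonneg (Finset.filter_subset _ _)
          fun _ _ _ => Finset.sum_nonneg fun _ _ => sq_nonneg _

theorem stmt14_general {ι κ : Type*} [Fintype ι] [Fintype κ] [DecidableEq κ] {m : ℕ}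
    {x : ι → Fin m → ℝ} (hx : ∀ i, IsRankingVector (x i)) (c : ι → κ)
    (hinj : ∀ ℓ, Set.InjOn x {i | c i = ℓ})
    {y : κ → Fin m → ℝ} (hy : ∀ ℓ, IsRankingVector (y ℓ)) :
    2 * ((Fintype.card ι : ℝ) - Fintype.card κ) ≤
      ∑ ℓ, ∑ i ∈ Finset.univ.filter (fun i => c i = ℓ), ∑ j, (x i j - y ℓ j) ^ 2 := by
  have hcard : (Fintype.card ι : ℝ) = ∑ ℓ, ((Finset.univ.filter fun i => c i = ℓ).card : ℝ) :=
    mod_cast Finset.card_eq_sum_card_fiberwise fun i _ => Finset.mem_univ (c i)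
  calc 2 * ((Fintype.card ι : ℝ) - Fintype.card κ)
      = ∑ ℓ, 2 * (((Finset.univ.filter fun i => c i = ℓ).card : ℝ) - 1) := by
        simp [hcard, ← Finset.mul_sum, Finset.sum_sub_distrib]
    _ ≤ _ := Finset.sum_le_sum fun ℓ _ =>
        two_mul_card_sub_one_le_sum_sq_sub (fun i _ => hx i) (by simpa using hinj ℓ) (hy ℓ)

/-- For `2k` pairwise distinct ranking vectors partitioned into `k` clusters with
ranking-vector centroids, the clustering objective is at least `2k`. -/
theorem stmt14 (m k : ℕ) (x : Fin (2 * k) → Fin m → ℝ)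
    (hx : ∀ i, IsRankingVector (x i)) (hdist : Function.Injective x)
    (c : Fin (2 * k) → Fin k)
    (y : Fin k → Fin m → ℝ) (hy : ∀ ℓ, IsRankingVector (y ℓ)) :
    2 * (k : ℝ) ≤
      ∑ ℓ, ∑ i ∈ Finset.univ.filter (fun i => c i = ℓ), ∑ j, (x i j - y ℓ j) ^ 2 := by
  have hcard : (Fintype.card (Fin (2 * k)) : ℝ) - Fintype.card (Fin k) = k := by
    simp only [Fintype.card_fin, Nat.cast_mul, Nat.cast_ofNat]
    ring
  simpa only [hcard] using stmt14_general hx c (fun _ => hdist.injOn) hy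
end

section
/- Let y ∈ X_m be a ranking vector, let 1 ≤ p ≤ m, and let f = (f_1, …, f_p) be a tuple of p distinct values from {1, …, m}. Let R = {1, …, m} \ {f_1, …, f_p}, let r̲_1 < ⋯ < r̲_{m−p} be the elements of R in ascending order and r̄_1 > ⋯ > r̄_{m−p} the same elements in descending order, and let a_1 < ⋯ < a_{m−p} be the values {y_{p+1}, …, y_m} (the last m−p coordinates of y) sorted in ascending order. Then for every ranking vector x ∈ X_m whose first p coordinates equal f (x_j = f_j for j = 1, …, p), Σ_{j=1}^p (y_j − f_j)² + Σ_{i=1}^{m−p} (a_i − r̲_i)² ≤ ‖x − y‖² ≤ Σ_{j=1}^p (y_j − f_j)² + Σ_{i=1}^{m−p} (a_i − r̄_i)². -/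
/-!
Permuting the last `m - p` coordinates, their part of `∑ (x t - y t) ^ 2` becomes
`∑ (a i - r (π i)) ^ 2` for some permutation `π`, where `r` is any enumeration of the values not
taken by `f`.
Expanding the squares, only the cross term `-2 ∑ a i * r (π i)` depends on `π`, so the
rearrangement inequality bounds the sum by its values at the sorted enumerations.
-/

section Rearrangement

variable {ι R : Type*} [Fintype ι] [CommRing R]

theorem sum_sq_sub_comp_perm (a r : ι → R) (σ : Equiv.Perm ι) :
    ∑ i, (a i - r (σ i)) ^ 2 = ∑ i, a i ^ 2 + ∑ i, r i ^ 2 - 2 * ∑ i, a i * r (σ i) := by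
  rw [← Equiv.sum_comp σ (fun i => r i ^ 2), Finset.mul_sum, ← Finset.sum_add_distrib,
    ← Finset.sum_sub_distrib]
  exact Finset.sum_congr rfl fun i _ => by ring

variable [LinearOrder R] [IsStrictOrderedRing R] {a r : ι → R}

theorem sum_sq_sub_le_sum_sq_sub_comp_perm_of_monovary (har : Monovary a r)
    (σ : Equiv.Perm ι) : ∑ i, (a i - r i) ^ 2 ≤ ∑ i, (a i - r (σ i)) ^ 2 := by
  have expand_id := sum_sq_sub_comp_perm a r 1
  rw [sum_sq_sub_comp_perm a r σ]
  simp only [Equiv.Perm.coe_one, id_eq] at expand_id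
  linarith [har.sum_mul_comp_perm_le_sum_mul (σ := σ)]

theorem sum_sq_sub_comp_perm_le_sum_sq_sub_of_antivary (har : Antivary a r)
    (σ : Equiv.Perm ι) : ∑ i, (a i - r (σ i)) ^ 2 ≤ ∑ i, (a i - r i) ^ 2 := by
  have expand_id := sum_sq_sub_comp_perm a r 1
  rw [sum_sq_sub_comp_perm a r σ]
  simp only [Equiv.Perm.coe_one, id_eq] at expand_id
  linarith [har.sum_mul_le_sum_mul_comp_perm (σ := σ)]

end Rearrangement

section Reindexing

variable {ι α β M : Type*}

theorem exists_perm_eq_comp_of_range_subset [Finite ι] {u r : ι → α} (hu : Function.Injective u)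
    (hur : Set.range u ⊆ Set.range r) : ∃ σ : Equiv.Perm ι, u = r ∘ σ := by
  obtain ⟨g, rfl⟩ := Set.range_subset_range_iff_exists_comp.mp hur
  exact ⟨Equiv.ofBijective g (Finite.injective_iff_bijective.mp hu.of_comp), rfl⟩

theorem exists_perm_sum_eq_of_range_subset [Fintype ι] [AddCommMonoid M] {w a : ι → α}
    {u r : ι → β} (ha : Function.Injective a) (haw : Set.range a ⊆ Set.range w)
    (hu : Function.Injective u) (hur : Set.range u ⊆ Set.range r) (F : α → β → M) :
    ∃ σ : Equiv.Perm ι, ∑ i, F (w i) (u i) = ∑ i, F (a i) (r (σ i)) := by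
  obtain ⟨τ, rfl⟩ := exists_perm_eq_comp_of_range_subset ha haw
  obtain ⟨σ, rfl⟩ := exists_perm_eq_comp_of_range_subset hu hur
  exact ⟨σ * τ, (Equiv.sum_comp τ fun i => F (w i) (r (σ i))).symm⟩

end Reindexing

section TailIndex

variable {m p : ℕ}

/-- The `i`-th of the last `m - p` indices of `Fin m`; it complements `Fin.castLE`, which embeds
the first `p` indices. -/
def tailIndex (hpm : p ≤ m) (i : Fin (m - p)) : Fin m :=
  Fin.cast (Nat.add_sub_cancel' hpm) (Fin.natAdd p i)

theorem tailIndex_injective (hpm : p ≤ m) : Function.Injective (tailIndex hpm) :=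
  (Fin.cast_injective _).comp (Fin.natAdd_injective _ p)

theorem tailIndex_ne_castLE (hpm : p ≤ m) (i : Fin (m - p)) (j : Fin p) :
    tailIndex hpm i ≠ Fin.castLE hpm j :=
  Fin.ne_of_val_ne (by simp only [tailIndex, Fin.val_cast, Fin.val_natAdd, Fin.val_castLE]; omega)

theorem exists_tailIndex_eq (hpm : p ≤ m) {t : Fin m} (ht : p ≤ t) :
    ∃ i, tailIndex hpm i = t :=
  ⟨⟨t - p, by omega⟩, Fin.ext (Nat.add_sub_cancel' ht)⟩

theorem sum_eq_sum_castLE_add_sum_tailIndex {M : Type*} [AddCommMonoid M] (hpm : p ≤ m)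
    (g : Fin m → M) :
    ∑ t, g t = ∑ j, g (Fin.castLE hpm j) + ∑ i, g (tailIndex hpm i) := by
  rw [← Equiv.sum_comp (finCongr (Nat.add_sub_cancel' hpm)), Fin.sum_univ_add]
  rfl

end TailIndex

namespace IsRankingVector

variable {m : ℕ} {x : Fin m → ℝ}

theorem injective (hx : IsRankingVector x) : Function.Injective x := by
  obtain ⟨σ, hσ⟩ := hx
  intro i j hij
  simpa [hσ, Fin.val_inj] using hij

theorem exists_eq_add_one (hx : IsRankingVector x) (i : Fin m) :
    ∃ t : Fin m, x i = ((t : ℕ) : ℝ) + 1 :=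
  hx.imp' (fun σ => σ i) fun _ hσ => hσ i

end IsRankingVector

theorem stmt15_general {R : Type*} [CommRing R] [LinearOrder R] [IsStrictOrderedRing R]
    {m p : ℕ} (hpm : p ≤ m) (V : Set R) (y : Fin m → R) (f : Fin p → R)
    (rlo rhi : Fin (m - p) → R) (hrlo : Monotone rlo) (hrhi : Antitone rhi)
    (hrloR : Set.range rlo = {v | v ∈ V ∧ ∀ j, v ≠ f j})
    (hrhiR : Set.range rhi = {v | v ∈ V ∧ ∀ j, v ≠ f j})
    (a : Fin (m - p) → R) (ha : StrictMono a)
    (haR : Set.range a = {v | ∃ t : Fin m, p ≤ (t : ℕ) ∧ v = y t})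
    (x : Fin m → R) (hx : Function.Injective x) (hxV : ∀ t, x t ∈ V)
    (hxf : ∀ j, x (Fin.castLE hpm j) = f j) :
    (∑ j, (y (Fin.castLE hpm j) - f j) ^ 2 + ∑ i, (a i - rlo i) ^ 2 ≤ ∑ t, (x t - y t) ^ 2) ∧
      ∑ t, (x t - y t) ^ 2 ≤
        ∑ j, (y (Fin.castLE hpm j) - f j) ^ 2 + ∑ i, (a i - rhi i) ^ 2 := by
  have tail_y : Set.range a ⊆ Set.range (y ∘ tailIndex hpm) := by
    rw [haR]
    rintro _ ⟨t, ht, rfl⟩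
    obtain ⟨i, rfl⟩ := exists_tailIndex_eq hpm ht
    exact ⟨i, rfl⟩
  have tail_x : Set.range (x ∘ tailIndex hpm) ⊆ {v | v ∈ V ∧ ∀ j, v ≠ f j} := by
    rintro _ ⟨i, rfl⟩
    exact ⟨hxV _, fun j => hxf j ▸ hx.ne (tailIndex_ne_castLE hpm i j)⟩
  have exists_perm_tail_sum_eq (r : Fin (m - p) → R)
      (hr : Set.range r = {v | v ∈ V ∧ ∀ j, v ≠ f j}) :
      ∃ σ : Equiv.Perm (Fin (m - p)),
        ∑ i, (y (tailIndex hpm i) - x (tailIndex hpm i)) ^ 2 = ∑ i, (a i - r (σ i)) ^ 2 :=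
    exists_perm_sum_eq_of_range_subset ha.injective tail_y (hx.comp (tailIndex_injective hpm))
      (tail_x.trans_eq hr.symm) fun v w => (v - w) ^ 2
  simp only [sub_sq_comm (x _), sum_eq_sum_castLE_add_sum_tailIndex hpm, hxf,
    add_le_add_iff_left]
  constructor
  · obtain ⟨σ, hσ⟩ := exists_perm_tail_sum_eq rlo hrloR
    exact (sum_sq_sub_le_sum_sq_sub_comp_perm_of_monovary
      (ha.monotone.monovary hrlo) σ).trans_eq hσ.symm
  · obtain ⟨σ, hσ⟩ := exists_perm_tail_sum_eq rhi hrhiR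
    exact hσ.trans_le (sum_sq_sub_comp_perm_le_sum_sq_sub_of_antivary
      (ha.monotone.antivary hrhi) σ)

/-- Lower and upper bounds on `‖x − y‖²` for any ranking vector `x` whose first `p`
coordinates are fixed to a tuple `f` of distinct values from `{1,…,m}`. Here `rlo`
(resp. `rhi`) enumerates `R = {1,…,m} \ {f₁,…,f_p}` in ascending (resp. descending)
order, and `a` enumerates the last `m − p` coordinates of `y` in ascending order. -/
theorem stmt15 (m p : ℕ) (hp1 : 1 ≤ p) (hpm : p ≤ m)
    (y : Fin m → ℝ) (hy : IsRankingVector y)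
    (f : Fin p → ℝ) (hfinj : Function.Injective f)
    (hfval : ∀ j, ∃ t : Fin m, f j = ((t : ℕ) : ℝ) + 1)
    (rlo rhi : Fin (m - p) → ℝ)
    (hrlo : StrictMono rlo) (hrhi : StrictAnti rhi)
    (hrloR : Set.range rlo =
      {v : ℝ | (∃ t : Fin m, v = ((t : ℕ) : ℝ) + 1) ∧ ∀ j, v ≠ f j})
    (hrhiR : Set.range rhi =
      {v : ℝ | (∃ t : Fin m, v = ((t : ℕ) : ℝ) + 1) ∧ ∀ j, v ≠ f j})
    (a : Fin (m - p) → ℝ) (ha : StrictMono a)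
    (haR : Set.range a = {v : ℝ | ∃ t : Fin m, p ≤ (t : ℕ) ∧ v = y t})
    (x : Fin m → ℝ) (hx : IsRankingVector x)
    (hxf : ∀ j : Fin p, x (Fin.castLE hpm j) = f j) :
    (∑ j : Fin p, (y (Fin.castLE hpm j) - f j) ^ 2 + ∑ i, (a i - rlo i) ^ 2
        ≤ ∑ t, (x t - y t) ^ 2) ∧
      ∑ t, (x t - y t) ^ 2
        ≤ ∑ j : Fin p, (y (Fin.castLE hpm j) - f j) ^ 2 + ∑ i, (a i - rhi i) ^ 2 :=
  stmt15_general hpm {v | ∃ t : Fin m, v = ((t : ℕ) : ℝ) + 1} y f rlo rhi hrlo.monotone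
    hrhi.antitone hrloR hrhiR a ha haR x hx.injective hx.exists_eq_add_one hxf
end
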